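/- Let A be a symmetric trace-free real 4×4 matrix and let P : ℝ⁴ → ℝ be the associated harmonic quadratic form P(x) = ∑_{k,l} A_{kl} x_k x_l. Let f : (0,∞) → ℝ be four times continuously differentiable. Then for every x ∈ ℝ⁴ \ {0}, Δ²( y ↦ f(|y|)·P(y)/|y|² )(x) = T(f)(|x|) · P(x)/|x|², where Δ² is the Euclidean bilaplacian on ℝ⁴. -/

import Mathlib

/-!
On `ℝ⁴`, a radial function times a harmonic quadratic form is mapped by the Laplacian to a function
of the same kind: if `P` is the form of a symmetric trace-free matrix, then away from the origin
`Δ(g(|y|) P) = (g'' + (7/r) g') P`. This follows from `∂ᵢ|y| = yᵢ/|y|`, Euler's identity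
`∑ yᵢ ∂ᵢP = 2P`, and `ΔP = 2 tr A = 0` (`lap_radial_mul`). With `g = f/r²` it becomes
`Δ(f(|y|) P/|y|²) = (L f)(|y|) P/|y|²`, where `L f = f'' + (3/r) f' - (8/r²) f`
(`lap_radial_mul_div`). Since the Laplacian at `x` depends only on the germ at `x`, this can be
applied twice on the open set `y ≠ 0`, and `L (L f) = T f` by direct computation.
-/

/-- The `i`-th partial derivative of a function on `ℝ⁴`. -/
noncomputable def pd (i : Fin 4) (f : EuclideanSpace ℝ (Fin 4) → ℝ)
    (x : EuclideanSpace ℝ (Fin 4)) : ℝ :=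
  fderiv ℝ f x (EuclideanSpace.single i 1)

/-- The Euclidean Laplacian on `ℝ⁴`: sum of second partial derivatives. -/
noncomputable def lap (f : EuclideanSpace ℝ (Fin 4) → ℝ)
    (x : EuclideanSpace ℝ (Fin 4)) : ℝ :=
  ∑ α, pd α (pd α f) x

/-- The fourth-order radial operator
`T(f)(r) = f⁗(r) + (6/r)·f‴(r) − (13/r²)·f″(r) − (19/r³)·f′(r) + (64/r⁴)·f(r)`. -/
noncomputable def Tf (f : ℝ → ℝ) (r : ℝ) : ℝ :=
  iteratedDeriv 4 f r + (6 / r) * iteratedDeriv 3 f r - (13 / r ^ 2) * iteratedDeriv 2 f r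
    - (19 / r ^ 3) * deriv f r + (64 / r ^ 4) * f r

open Filter Topology

local notation "E4" => EuclideanSpace ℝ (Fin 4)

/-- `u` is differentiable at `x`, with `i`-th partial derivative `d` there. Carrying
differentiability along excludes the junk value of `fderiv`. -/
def HasPd (i : Fin 4) (u : E4 → ℝ) (d : ℝ) (x : E4) : Prop :=
  DifferentiableAt ℝ u x ∧ pd i u x = d

theorem HasFDerivAt.hasPd {u : E4 → ℝ} {u' : E4 →L[ℝ] ℝ} {x : E4} (h : HasFDerivAt u u' x)
    (i : Fin 4) : HasPd i u (u' (EuclideanSpace.single i 1)) x :=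
  ⟨h.differentiableAt, by rw [pd, h.fderiv]⟩

theorem HasPd.mul {i : Fin 4} {u v : E4 → ℝ} {a b : ℝ} {x : E4} (hu : HasPd i u a x)
    (hv : HasPd i v b x) : HasPd i (fun y => u y * v y) (a * v x + u x * b) x := by
  obtain ⟨hu, rfl⟩ := hu
  obtain ⟨hv, rfl⟩ := hv
  refine ⟨hu.fun_mul hv, ?_⟩
  rw [pd, (hu.hasFDerivAt.fun_mul hv.hasFDerivAt).fderiv]
  simp [pd]
  ring

theorem HasPd.add {i : Fin 4} {u v : E4 → ℝ} {a b : ℝ} {x : E4} (hu : HasPd i u a x)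
    (hv : HasPd i v b x) : HasPd i (fun y => u y + v y) (a + b) x := by
  obtain ⟨hu, rfl⟩ := hu
  obtain ⟨hv, rfl⟩ := hv
  exact (hu.hasFDerivAt.add hv.hasFDerivAt).hasPd i

theorem HasPd.const_mul {i : Fin 4} {u : E4 → ℝ} {a : ℝ} {x : E4} (c : ℝ) (hu : HasPd i u a x) :
    HasPd i (fun y => c * u y) (c * a) x := by
  obtain ⟨hu, rfl⟩ := hu
  exact (hu.hasFDerivAt.const_mul c).hasPd i

theorem HasPd.sum {i : Fin 4} {u : Fin 4 → E4 → ℝ} {a : Fin 4 → ℝ} {x : E4}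
    (hu : ∀ k, HasPd i (u k) (a k) x) : HasPd i (fun y => ∑ k, u k y) (∑ k, a k) x := by
  simp only [Fin.sum_univ_four]
  exact (((hu 0).add (hu 1)).add (hu 2)).add (hu 3)

theorem hasPd_coord (i k : Fin 4) (x : E4) :
    HasPd i (fun y => y k) (if k = i then 1 else 0) x := by
  have h : HasPd i (fun y => y k) _ x :=
    (EuclideanSpace.proj k : E4 →L[ℝ] ℝ).hasFDerivAt.hasPd i
  simpa [Pi.single_apply] using h

theorem hasPd_radial (i : Fin 4) {g : ℝ → ℝ} {g' : ℝ} {x : E4} (hx : x ≠ 0)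
    (hg : HasDerivAt g g' ‖x‖) : HasPd i (fun y => g ‖y‖) (g' / ‖x‖ * x i) x := by
  have hn : HasFDerivAt (fun y : E4 => ‖y‖) (fderiv ℝ (fun y : E4 => ‖y‖) x) x :=
    ((contDiffAt_norm ℝ hx (n := 1)).differentiableAt one_ne_zero).hasFDerivAt
  -- The derivative of `‖y‖` is read off from that of `‖y‖ ^ 2`.
  have hsq := (hn.pow 2).unique (hasStrictFDerivAt_norm_sq x).hasFDerivAt
  have hpos : 0 < ‖x‖ := norm_pos_iff.2 hx
  have key := DFunLike.congr_fun hsq (EuclideanSpace.single i 1)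
  simp [EuclideanSpace.inner_single_right] at key
  have h : HasPd i (fun y => g ‖y‖) _ x := (hg.comp_hasFDerivAt x hn).hasPd i
  convert h using 1
  simp
  field_simp
  linear_combination -(g' / 2) * key

theorem pd_congr {u v : E4 → ℝ} {x : E4} (h : u =ᶠ[𝓝 x] v) (i : Fin 4) : pd i u x = pd i v x := by
  rw [pd, pd, h.fderiv_eq]

/-- The Laplacian at `x` depends only on the germ of the function at `x`. -/
theorem lap_congr {u v : E4 → ℝ} {x : E4} (h : u =ᶠ[𝓝 x] v) : lap u x = lap v x :=
  Finset.sum_congr rfl fun i _ => pd_congr (h.eventuallyEq_nhds.mono fun _ hy => pd_congr hy i) i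

theorem eventually_ne_zero {x : E4} (hx : x ≠ 0) : ∀ᶠ y in 𝓝 x, y ≠ 0 :=
  isOpen_ne.mem_nhds hx

/-- Symmetry of `A` makes the two halves of the product rule equal, so `∂ᵢP = 2 (A x)ᵢ`. -/
theorem hasPd_quadratic {A : Matrix (Fin 4) (Fin 4) ℝ} (hA : A.IsSymm) (i : Fin 4) (x : E4) :
    HasPd i (fun y => ∑ k, ∑ l, A k l * y k * y l) (2 * ∑ l, A i l * x l) x := by
  have h := HasPd.sum fun k => HasPd.sum fun l =>
    ((hasPd_coord i k x).const_mul (A k l)).mul (hasPd_coord i l x)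
  convert h using 1
  have e : ∀ k, A k i = A i k := fun k => hA.apply i k
  simp [Finset.sum_add_distrib, ite_mul, mul_ite, Finset.sum_ite_irrel, e, two_mul]

/-- `Δ(g(|y|) P) = (g'' + (7/r) g') P` for the harmonic quadratic form `P` of `A`. -/
theorem lap_radial_mul {A : Matrix (Fin 4) (Fin 4) ℝ} (hA : A.IsSymm) (htr : A.trace = 0)
    {g g1 g2 : ℝ → ℝ} (h1 : ∀ r, 0 < r → HasDerivAt g (g1 r) r)
    (h2 : ∀ r, 0 < r → HasDerivAt g1 (g2 r) r) {x : E4} (hx : x ≠ 0) :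
    lap (fun y => g ‖y‖ * ∑ k, ∑ l, A k l * y k * y l) x
      = (g2 ‖x‖ + 7 / ‖x‖ * g1 ‖x‖) * ∑ k, ∑ l, A k l * x k * x l := by
  have hpos : 0 < ‖x‖ := norm_pos_iff.2 hx
  have first : ∀ i, pd i (fun y => g ‖y‖ * ∑ k, ∑ l, A k l * y k * y l) =ᶠ[𝓝 x]
      fun y => (g1 ‖y‖ / ‖y‖ * y i) * (∑ k, ∑ l, A k l * y k * y l)
        + g ‖y‖ * (2 * ∑ l, A i l * y l) := fun i =>
    (eventually_ne_zero hx).mono fun y hy =>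
      ((hasPd_radial i hy (h1 _ (norm_pos_iff.2 hy))).mul (hasPd_quadratic hA i y)).2
  have hh : HasDerivAt (fun r => g1 r / r) ((g2 ‖x‖ * ‖x‖ - g1 ‖x‖ * 1) / ‖x‖ ^ 2) ‖x‖ :=
    (h2 _ hpos).fun_div (hasDerivAt_id' _) hpos.ne'
  have second : ∀ i, pd i (pd i (fun y => g ‖y‖ * ∑ k, ∑ l, A k l * y k * y l)) x = _ := fun i =>
    (pd_congr (first i) i).trans
      ((((hasPd_radial i hx hh).mul (hasPd_coord i i x)).mul (hasPd_quadratic hA i x)).add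
        ((hasPd_radial i hx (h1 _ hpos)).mul
          ((HasPd.sum fun l => (hasPd_coord i l x).const_mul (A i l)).const_mul 2))).2
  have hr : ‖x‖ ^ 2 = x 0 ^ 2 + x 1 ^ 2 + x 2 ^ 2 + x 3 ^ 2 := by
    simp [EuclideanSpace.real_norm_sq_eq, Fin.sum_univ_four]
  have htr' : A 3 3 = -(A 0 0 + A 1 1 + A 2 2) := by
    simp [Matrix.trace, Fin.sum_univ_four] at htr
    linarith
  rw [lap]
  simp only [second, mul_ite, mul_one, mul_zero, Finset.sum_ite_eq', Finset.mem_univ, if_true]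
  set p := ∑ k, ∑ l, A k l * x k * x l with hp
  -- Euler's identity for the homogeneous polynomial `P` of degree two.
  have euler : ∑ i, x i * ∑ l, A i l * x l = p := by
    simp only [hp, Finset.mul_sum]
    exact Finset.sum_congr rfl fun k _ => Finset.sum_congr rfl fun l _ => by ring
  rw [Fin.sum_univ_four] at euler
  rw [Fin.sum_univ_four, htr']
  generalize (∑ l, A 0 l * x l) = q0 at *
  generalize (∑ l, A 1 l * x l) = q1 at *
  generalize (∑ l, A 2 l * x l) = q2 at *
  generalize (∑ l, A 3 l * x l) = q3 at *
  generalize ‖x‖ = r at *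
  calc _ = ((g2 r * r - g1 r) / r ^ 2 / r * (x 0 ^ 2 + x 1 ^ 2 + x 2 ^ 2 + x 3 ^ 2)
          + 4 * (g1 r / r)) * p
        + 4 * (g1 r / r) * (x 0 * q0 + x 1 * q1 + x 2 * q2 + x 3 * q3) := by ring
    _ = (g2 r + 7 / r * g1 r) * p := by
      rw [← hr, euler]
      field_simp
      ring

/-- `Δ(f(|y|) P/|y|²) = (L f)(|y|) P/|y|²`, where `L f = f'' + (3/r) f' - (8/r²) f`. -/
theorem lap_radial_mul_div {A : Matrix (Fin 4) (Fin 4) ℝ} (hA : A.IsSymm) (htr : A.trace = 0)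
    {f f1 f2 : ℝ → ℝ} (h1 : ∀ r, 0 < r → HasDerivAt f (f1 r) r)
    (h2 : ∀ r, 0 < r → HasDerivAt f1 (f2 r) r) {x : E4} (hx : x ≠ 0) :
    lap (fun y => f ‖y‖ * (∑ k, ∑ l, A k l * y k * y l) / ‖y‖ ^ 2) x
      = (f2 ‖x‖ + 3 / ‖x‖ * f1 ‖x‖ - 8 / ‖x‖ ^ 2 * f ‖x‖)
        * (∑ k, ∑ l, A k l * x k * x l) / ‖x‖ ^ 2 := by
  have hpos : 0 < ‖x‖ := norm_pos_iff.2 hx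
  have e : (fun y : E4 => f ‖y‖ * (∑ k, ∑ l, A k l * y k * y l) / ‖y‖ ^ 2)
      = fun y => (fun r => f r / r ^ 2) ‖y‖ * ∑ k, ∑ l, A k l * y k * y l := by
    funext y
    ring
  have d1 : ∀ r, 0 < r → HasDerivAt (fun r => f r / r ^ 2) (f1 r / r ^ 2 - 2 * f r / r ^ 3) r := by
    intro r hr
    refine HasDerivAt.congr_deriv ((h1 r hr).fun_div (hasDerivAt_pow 2 r) (by positivity)) ?_
    field_simp
    push_cast
    ring
  have d2 : ∀ r, 0 < r → HasDerivAt (fun r => f1 r / r ^ 2 - 2 * f r / r ^ 3)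
      (f2 r / r ^ 2 - 4 * f1 r / r ^ 3 + 6 * f r / r ^ 4) r := by
    intro r hr
    refine HasDerivAt.congr_deriv (((h2 r hr).fun_div (hasDerivAt_pow 2 r) (by positivity)).fun_sub
      (((h1 r hr).const_mul 2).fun_div (hasDerivAt_pow 3 r) (by positivity))) ?_
    field_simp
    ring
  rw [e, lap_radial_mul hA htr d1 d2 hx]
  field_simp
  ring

/-- On the open half-line the derivatives within it, which smoothness on `(0, ∞)` controls, are the
ordinary ones. -/
theorem hasDerivAt_iteratedDeriv {f : ℝ → ℝ} (hf : ContDiffOn ℝ 4 f (Set.Ioi 0)) {n : ℕ}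
    (hn : n < 4) {r : ℝ} (hr : 0 < r) :
    HasDerivAt (iteratedDeriv n f) (iteratedDeriv (n + 1) f r) r := by
  have hd := hf.differentiableOn_iteratedDerivWithin (m := n) (by exact_mod_cast hn)
    (uniqueDiffOn_Ioi 0)
  have hd' := hd.congr fun y hy => (iteratedDerivWithin_of_isOpen isOpen_Ioi hy).symm
  rw [iteratedDeriv_succ]
  exact (hd'.differentiableAt (Ioi_mem_nhds hr)).hasDerivAt

/-- For a symmetric trace-free `4×4` matrix `A` with associated harmonic
quadratic form `P`, and a `C⁴` function `f` on `(0,∞)`, the bilaplacian of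
`y ↦ f(|y|)·P(y)/|y|²` at any `x ≠ 0` equals `T(f)(|x|)·P(x)/|x|²`. -/
theorem stmt_4 (A : Matrix (Fin 4) (Fin 4) ℝ) (hAsymm : A.IsSymm) (hAtr : A.trace = 0)
    (P : EuclideanSpace ℝ (Fin 4) → ℝ)
    (hP : ∀ x, P x = ∑ k, ∑ l, A k l * x k * x l)
    (f : ℝ → ℝ) (hf : ContDiffOn ℝ 4 f (Set.Ioi (0 : ℝ))) :
    ∀ x : EuclideanSpace ℝ (Fin 4), x ≠ 0 →
      lap (lap (fun y => f ‖y‖ * P y / ‖y‖ ^ 2)) x = Tf f ‖x‖ * P x / ‖x‖ ^ 2 := by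
  intro x hx
  obtain rfl : P = fun x => ∑ k, ∑ l, A k l * x k * x l := funext hP
  have hpos : 0 < ‖x‖ := norm_pos_iff.2 hx
  have h0 : ∀ r, 0 < r → HasDerivAt f (iteratedDeriv 1 f r) r := fun r hr => by
    simpa using hasDerivAt_iteratedDeriv hf (n := 0) (by norm_num) hr
  have h1 : ∀ r, 0 < r → HasDerivAt (iteratedDeriv 1 f) (iteratedDeriv 2 f r) r :=
    fun r hr => hasDerivAt_iteratedDeriv hf (by norm_num) hr
  have h2 : ∀ r, 0 < r → HasDerivAt (iteratedDeriv 2 f) (iteratedDeriv 3 f r) r :=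
    fun r hr => hasDerivAt_iteratedDeriv hf (by norm_num) hr
  have h3 : ∀ r, 0 < r → HasDerivAt (iteratedDeriv 3 f) (iteratedDeriv 4 f r) r :=
    fun r hr => hasDerivAt_iteratedDeriv hf (by norm_num) hr
  have step : lap (fun y => f ‖y‖ * (∑ k, ∑ l, A k l * y k * y l) / ‖y‖ ^ 2) =ᶠ[𝓝 x]
      fun y => (fun r => iteratedDeriv 2 f r + 3 / r * iteratedDeriv 1 f r - 8 / r ^ 2 * f r) ‖y‖
        * (∑ k, ∑ l, A k l * y k * y l) / ‖y‖ ^ 2 :=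
    (eventually_ne_zero hx).mono fun y hy => lap_radial_mul_div hAsymm hAtr h0 h1 hy
  -- `d1` and `d2` differentiate `L f = f'' + (3/r) f' - (8/r²) f` twice, to apply `L` to it.
  have c1 : ∀ r : ℝ, 0 < r → ∀ c : ℝ, HasDerivAt (fun r => c / r) (-c / r ^ 2) r := by
    intro r hr c
    refine HasDerivAt.congr_deriv ((hasDerivAt_const r c).fun_div (hasDerivAt_id' r) hr.ne') ?_
    ring
  have c2 : ∀ r : ℝ, 0 < r → ∀ c : ℝ, HasDerivAt (fun r => c / r ^ 2) (-2 * c / r ^ 3) r := by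
    intro r hr c
    refine HasDerivAt.congr_deriv ((hasDerivAt_const r c).fun_div
      (hasDerivAt_pow 2 r) (by positivity)) ?_
    field_simp
    push_cast
    ring
  have c3 : ∀ r : ℝ, 0 < r → ∀ c : ℝ, HasDerivAt (fun r => c / r ^ 3) (-3 * c / r ^ 4) r := by
    intro r hr c
    refine HasDerivAt.congr_deriv ((hasDerivAt_const r c).fun_div
      (hasDerivAt_pow 3 r) (by positivity)) ?_
    field_simp
    push_cast
    ring
  have d1 : ∀ r, 0 < r → HasDerivAt
      (fun r => iteratedDeriv 2 f r + 3 / r * iteratedDeriv 1 f r - 8 / r ^ 2 * f r)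
      (iteratedDeriv 3 f r + 3 / r * iteratedDeriv 2 f r - 11 / r ^ 2 * iteratedDeriv 1 f r
        + 16 / r ^ 3 * f r) r := by
    intro r hr
    refine HasDerivAt.congr_deriv (((h2 r hr).fun_add ((c1 r hr 3).fun_mul (h1 r hr))).fun_sub
      ((c2 r hr 8).fun_mul (h0 r hr))) ?_
    ring
  have d2 : ∀ r, 0 < r → HasDerivAt
      (fun r => iteratedDeriv 3 f r + 3 / r * iteratedDeriv 2 f r - 11 / r ^ 2 * iteratedDeriv 1 f r
        + 16 / r ^ 3 * f r)
      (iteratedDeriv 4 f r + 3 / r * iteratedDeriv 3 f r - 14 / r ^ 2 * iteratedDeriv 2 f r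
        + 38 / r ^ 3 * iteratedDeriv 1 f r - 48 / r ^ 4 * f r) r := by
    intro r hr
    refine HasDerivAt.congr_deriv ((((h3 r hr).fun_add ((c1 r hr 3).fun_mul (h2 r hr))).fun_sub
      ((c2 r hr 11).fun_mul (h1 r hr))).fun_add ((c3 r hr 16).fun_mul (h0 r hr))) ?_
    ring
  refine (lap_congr step).trans ((lap_radial_mul_div hAsymm hAtr d1 d2 hx).trans ?_)
  rw [Tf, ← iteratedDeriv_one (f := f)]
  ring
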